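/- Suppose ψ̃ has M vanishing moments. Then for every function f : ℝ² → ℝ all of whose partial derivatives ∂^{a+b}/∂x^a∂y^b f with 0 ≤ a ≤ M, 0 ≤ b ≤ M exist and are continuous, every σ₁, σ₂ > 0 and every θ₁, θ₂ ∈ ℝ, ∬_{ℝ²} f(x,y) ψ̃(σ₁x − θ₁) ψ̃(σ₂y − θ₂) dx dy = (σ₁σ₂)^{−M} ∬_{ℝ²} Ψ_M(σ₁x − θ₁) Ψ_M(σ₂y − θ₂) · ∂^{2M} f/∂x^M∂y^M (x,y) dx dy, both integrands being supported in the rectangle R(σ₁,θ₁,σ₂,θ₂). -/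

import Mathlib

open MeasureTheory

/-- Iterated antiderivatives of a wavelet: `Psi L ψ 0 = ψ` and
`Psi L ψ (m+1) x = ∫_{-L}^x Psi L ψ m t dt`. -/
noncomputable def Psi (L : ℝ) (ψ : ℝ → ℝ) : ℕ → ℝ → ℝ
  | 0 => ψ
  | m + 1 => fun x => ∫ t in (-L)..x, Psi L ψ m t

/-- Mixed partial derivative `∂^{a+b} f/∂x^a ∂y^b` of `f : ℝ² → ℝ` (first `a` times
in `x`, then `b` times in `y`). -/
noncomputable def partialDeriv2 (a b : ℕ) (f : ℝ → ℝ → ℝ) : ℝ → ℝ → ℝ :=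
  fun x y => iteratedDeriv b (fun y' => iteratedDeriv a (fun x' => f x' y') x) y

/-! Moment conditions propagate to antiderivatives: if `∫ x ^ k * φ x = 0` for `k ≤ m`, then the
antiderivative `Φ` of `φ` from the left end of its support is again supported in the same interval
because `∫ φ = 0`, and `(k + 1) * ∫ x ^ k * Φ x = -∫ x ^ (k + 1) * φ x = 0` for `k < m`. Hence one
can integrate by parts `M` times against a wavelet without boundary terms, each step costing a
factor `-σ⁻¹` when the wavelet is dilated by `σ`. Doing so in `x` and then, after Fubini, in `y`
gives the two-dimensional formula, where the signs `(-1) ^ M` cancel. -/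

section Integrability

variable {X Y : Type*} [TopologicalSpace X] [TopologicalSpace Y]

lemma hasCompactSupport_mul_prod {R : Type*} [MulZeroClass R] [R1Space X] [R1Space Y]
    {φ : X → R} {χ : Y → R} (hφ : HasCompactSupport φ) (hχ : HasCompactSupport χ) :
    HasCompactSupport fun z : X × Y => φ z.1 * χ z.2 := by
  refine .of_support_subset_isCompact (hφ.isCompact.prod hχ.isCompact) fun z hz => ?_
  exact ⟨subset_tsupport _ (left_ne_zero_of_mul hz), subset_tsupport _ (right_ne_zero_of_mul hz)⟩

lemma integrable_continuous_mul_of_hasCompactSupport {R : Type*} [NormedRing R] [T2Space X]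
    [MeasurableSpace X] [OpensMeasurableSpace X] [SecondCountableTopologyEither X R]
    {μ : Measure X} {u g : X → R} (hu : Continuous u) (hg : Integrable g μ)
    (hgc : HasCompactSupport g) : Integrable (fun x => u x * g x) μ := by
  refine (integrableOn_iff_integrable_of_support_subset ?_).1
    (hg.integrableOn.continuousOn_mul hu.continuousOn hgc.isCompact)
  exact (Function.support_mul_subset_right _ _).trans (subset_tsupport g)

lemma integrable_of_norm_le_of_support_subset {X E : Type*} [MeasurableSpace X]
    [NormedAddCommGroup E] {μ : Measure X} {g : X → E} {s : Set X} {B : ℝ}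
    (hg : AEStronglyMeasurable g μ) (hB : ∀ x, ‖g x‖ ≤ B) (hs : μ s ≠ ⊤)
    (hgs : Function.support g ⊆ s) : Integrable g μ :=
  (integrableOn_iff_integrable_of_support_subset hgs).1
    (Measure.integrableOn_of_bounded hs hg (ae_of_all _ hB))

end Integrability

section Primitive

variable {E : Type*} [NormedAddCommGroup E] [NormedSpace ℝ E] {a b : ℝ}

lemma intervalIntegral_eq_integral_of_support_subset_Icc {φ : ℝ → E}
    (hs : Function.support φ ⊆ Set.Icc a b) : ∫ x in a..b, φ x = ∫ x, φ x := by
  rcases le_or_gt a b with hab | hba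
  · rw [intervalIntegral.integral_of_le hab, ← integral_Icc_eq_integral_Ioc]
    exact setIntegral_eq_integral_of_forall_compl_eq_zero fun x hx =>
      Function.notMem_support.1 fun h => hx (hs h)
  · rw [Set.Icc_eq_empty hba.not_ge, Set.subset_empty_iff, Function.support_eq_empty_iff] at hs
    simp [hs]

lemma support_primitive_subset_Icc {φ : ℝ → E} (hs : Function.support φ ⊆ Set.Icc a b)
    (h0 : ∫ x, φ x = 0) : (Function.support fun x => ∫ t in a..x, φ t) ⊆ Set.Icc a b := by
  refine fun x hx => ⟨not_lt.1 fun hxa => hx ?_, not_lt.1 fun hbx => hx ?_⟩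
  · have hzero : ∀ᵐ t, t ∈ Set.uIoc a x → φ t = 0 := by
      filter_upwards [Measure.ae_ne volume a] with t hta ht
      rw [Set.uIoc_of_ge hxa.le] at ht
      exact Function.notMem_support.1 fun h => hta (ht.2.antisymm (hs h).1)
    exact intervalIntegral.integral_zero_ae hzero
  · exact (intervalIntegral_eq_integral_of_support_subset_Icc
      (hs.trans (Set.Icc_subset_Icc_right hbx.le))).trans h0

lemma integral_mul_eq_neg_integral_deriv_mul_primitive {u φ : ℝ → ℝ}
    (hu : AbsolutelyContinuousOnInterval u a b) (hφ : Integrable φ)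
    (hs : Function.support φ ⊆ Set.Icc a b) (h0 : ∫ x, φ x = 0) :
    ∫ x, u x * φ x = -∫ x, deriv u x * ∫ t in a..x, φ t := by
  set Φ : ℝ → ℝ := fun x => ∫ t in a..x, φ t
  -- `Φ` is differentiable only almost everywhere, so the classical integration by parts is replaced
  -- by the one for absolutely continuous functions.
  have hΦ : AbsolutelyContinuousOnInterval Φ a b :=
    hφ.intervalIntegrable.absolutelyContinuousOnInterval_intervalIntegral Set.left_mem_uIcc
  have hΦa : Φ a = 0 := intervalIntegral.integral_same
  have hΦb : Φ b = 0 := (intervalIntegral_eq_integral_of_support_subset_Icc hs).trans h0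
  have hderiv : ∀ᵐ x, deriv Φ x = φ x := by
    filter_upwards [LocallyIntegrable.ae_hasDerivAt_integral hφ.locallyIntegrable] with x hx
    exact (hx a).deriv
  calc ∫ x, u x * φ x = ∫ x in a..b, u x * φ x :=
        (intervalIntegral_eq_integral_of_support_subset_Icc
          ((Function.support_mul_subset_right _ _).trans hs)).symm
    _ = ∫ x in a..b, u x * deriv Φ x :=
        intervalIntegral.integral_congr_ae (hderiv.mono fun x hx _ => by rw [hx])
    _ = -∫ x in a..b, deriv u x * Φ x := by
        rw [hu.integral_mul_deriv_eq_deriv_mul hΦ, hΦa, hΦb]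
        ring
    _ = -∫ x, deriv u x * Φ x := by
        rw [intervalIntegral_eq_integral_of_support_subset_Icc
          ((Function.support_mul_subset_right _ _).trans (support_primitive_subset_Icc hs h0))]

end Primitive

/-- Wavelets on `[-L, L]` with `M` vanishing moments. Only integrability is asked for, instead of
boundedness, and `M = 0` imposes no moment condition. -/
structure IsWavelet (M : ℕ) (L : ℝ) (ψ : ℝ → ℝ) : Prop where
  integrable : Integrable ψ
  support_subset : Function.support ψ ⊆ Set.Icc (-L) L
  moment_eq_zero : ∀ k < M, ∫ x, x ^ k * ψ x = 0

/-- The window `I(σ, θ)`, outside which `x ↦ ψ (σ * x - θ)` vanishes when `ψ` is supported in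
`[-L, L]` and `0 < σ`. -/
def window (L σ θ : ℝ) : Set ℝ := Set.Icc ((θ - L) / σ) ((θ + L) / σ)

lemma mem_window_iff {L σ θ x : ℝ} (hσ : 0 < σ) :
    x ∈ window L σ θ ↔ σ * x - θ ∈ Set.Icc (-L) L := by
  rw [window, Set.mem_Icc, Set.mem_Icc, div_le_iff₀' hσ, le_div_iff₀' hσ, neg_le_sub_iff_le_add,
    sub_le_iff_le_add, sub_le_iff_le_add, add_comm L θ]

namespace IsWavelet

variable {M m : ℕ} {L : ℝ} {ψ : ℝ → ℝ}

lemma of_abs_le {B : ℝ} (hmeas : AEStronglyMeasurable ψ) (hB : ∀ x, |ψ x| ≤ B)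
    (hsupp : ∀ x, L < |x| → ψ x = 0) (hmom : ∀ k < M, ∫ x, x ^ k * ψ x = 0) :
    IsWavelet M L ψ := by
  have hs : Function.support ψ ⊆ Set.Icc (-L) L := fun x hx =>
    abs_le.1 (not_lt.1 fun h => hx (hsupp x h))
  exact ⟨integrable_of_norm_le_of_support_subset hmeas hB measure_Icc_lt_top.ne hs, hs, hmom⟩

lemma mono (hψ : IsWavelet M L ψ) (hm : m ≤ M) : IsWavelet m L ψ :=
  ⟨hψ.integrable, hψ.support_subset, fun k hk => hψ.moment_eq_zero k (hk.trans_le hm)⟩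

lemma hasCompactSupport (hψ : IsWavelet M L ψ) : HasCompactSupport ψ :=
  .of_support_subset_isCompact isCompact_Icc hψ.support_subset

lemma integral_eq_zero (hψ : IsWavelet (M + 1) L ψ) : ∫ x, ψ x = 0 := by
  simpa using hψ.moment_eq_zero 0 M.succ_pos

lemma integral_mul_eq_neg_integral_deriv_mul (hψ : IsWavelet (M + 1) L ψ) {u : ℝ → ℝ}
    (hu : ContDiff ℝ 1 u) :
    ∫ x, u x * ψ x = -∫ x, deriv u x * ∫ t in (-L)..x, ψ t :=
  integral_mul_eq_neg_integral_deriv_mul_primitive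
    hu.contDiffOn.absolutelyContinuousOnInterval hψ.integrable hψ.support_subset
    hψ.integral_eq_zero

lemma primitive (hψ : IsWavelet (M + 1) L ψ) :
    IsWavelet M L fun x => ∫ t in (-L)..x, ψ t where
  integrable := by
    refine (integrableOn_iff_integrable_of_support_subset
      (support_primitive_subset_Icc hψ.support_subset hψ.integral_eq_zero)).1 ?_
    exact (intervalIntegral.continuous_primitive
      (fun _ _ => hψ.integrable.intervalIntegrable) _).integrableOn_Icc
  support_subset := support_primitive_subset_Icc hψ.support_subset hψ.integral_eq_zero
  moment_eq_zero k hk := by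
    have hparts := hψ.integral_mul_eq_neg_integral_deriv_mul (u := fun x => x ^ (k + 1))
      (by fun_prop)
    simp only [hψ.moment_eq_zero (k + 1) (by lia), deriv_pow_field, Nat.add_sub_cancel, mul_assoc,
      integral_const_mul] at hparts
    exact (mul_eq_zero.1 (neg_eq_zero.1 hparts.symm)).resolve_left (by positivity)

lemma psi (hψ : IsWavelet M L ψ) {n : ℕ} (h : n + m ≤ M) : IsWavelet n L (Psi L ψ m) := by
  induction m generalizing n with
  | zero => exact hψ.mono h
  | succ m ih => exact (ih (n := n + 1) (by lia)).primitive

lemma integral_mul_eq_integral_iteratedDeriv_mul_psi (hψ : IsWavelet M L ψ) {g : ℝ → ℝ}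
    (hg : ContDiff ℝ M g) :
    ∫ x, g x * ψ x = (-1) ^ M * ∫ x, iteratedDeriv M g x * Psi L ψ M x := by
  induction M with
  | zero => simp [Psi]
  | succ M ih =>
    obtain ⟨hgM, hgM'⟩ := contDiff_nat_succ_iff_contDiff_one_iteratedDeriv.1 hg
    have hΨ : IsWavelet (0 + 1) L (Psi L ψ M) := hψ.psi (by lia)
    rw [ih (hψ.mono M.le_succ) hgM, hΨ.integral_mul_eq_neg_integral_deriv_mul hgM',
      ← iteratedDeriv_succ, pow_succ]
    simp only [Psi]
    ring

end IsWavelet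

lemma integral_comp_mul_sub {E : Type*} [NormedAddCommGroup E] [NormedSpace ℝ E] (h : ℝ → E)
    (σ θ : ℝ) : ∫ x, h (σ * x - θ) = |σ⁻¹| • ∫ s, h s := by
  rw [Measure.integral_comp_mul_left (fun s => h (s - θ)) σ, integral_sub_right_eq_self h θ]

lemma iteratedDeriv_comp_const_mul_add {𝕜 : Type*} [NontriviallyNormedField 𝕜] {n : ℕ}
    {g : 𝕜 → 𝕜} (hg : ContDiff 𝕜 n g) (c θ s : 𝕜) :
    iteratedDeriv n (fun s => g (c * (s + θ))) s = c ^ n * iteratedDeriv n g (c * (s + θ)) := by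
  rw [iteratedDeriv_comp_add_const n (fun s => g (c * s)), iteratedDeriv_comp_const_mul hg]

namespace IsWavelet

variable {M N : ℕ} {L L₁ L₂ σ σ₁ σ₂ : ℝ} {ψ ψ₁ ψ₂ χ : ℝ → ℝ}

lemma integral_mul_comp_eq_integral_iteratedDeriv_mul_psi (hψ : IsWavelet M L ψ) {g : ℝ → ℝ}
    (hg : ContDiff ℝ M g) (hσ : σ ≠ 0) (θ : ℝ) :
    ∫ x, g x * ψ (σ * x - θ)
      = (-σ⁻¹) ^ M * ∫ x, iteratedDeriv M g x * Psi L ψ M (σ * x - θ) := by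
  have hinv (x : ℝ) : σ⁻¹ * (σ * x - θ + θ) = x := by
    rw [sub_add_cancel, inv_mul_cancel_left₀ hσ]
  have hcov (v φ : ℝ → ℝ) :
      ∫ x, v x * φ (σ * x - θ) = |σ⁻¹| * ∫ s, v (σ⁻¹ * (s + θ)) * φ s := by
    simpa only [hinv, smul_eq_mul] using
      integral_comp_mul_sub (fun s => v (σ⁻¹ * (s + θ)) * φ s) σ θ
  have hg' : ContDiff ℝ M fun s => g (σ⁻¹ * (s + θ)) := hg.comp (by fun_prop)
  rw [hcov, hcov, hψ.integral_mul_eq_integral_iteratedDeriv_mul_psi hg']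
  simp only [iteratedDeriv_comp_const_mul_add hg, mul_assoc, integral_const_mul]
  rw [neg_pow σ⁻¹]
  ring

lemma integrable_comp (hψ : IsWavelet M L ψ) (hσ : σ ≠ 0) (θ : ℝ) :
    Integrable fun x => ψ (σ * x - θ) :=
  (hψ.integrable.comp_sub_right θ).comp_mul_left' hσ

lemma hasCompactSupport_comp (hψ : IsWavelet M L ψ) (hσ : σ ≠ 0) (θ : ℝ) :
    HasCompactSupport fun x => ψ (σ * x - θ) :=
  hψ.hasCompactSupport.comp_homeomorph (affineHomeomorph σ (-θ) hσ)

lemma integrable_mul_prod (hψ : IsWavelet M L ψ) (hχ : Integrable χ) (hχc : HasCompactSupport χ)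
    {F : ℝ × ℝ → ℝ} (hF : Continuous F) (hσ : σ ≠ 0) (θ : ℝ) :
    Integrable fun z : ℝ × ℝ => F z * (ψ (σ * z.1 - θ) * χ z.2) :=
  integrable_continuous_mul_of_hasCompactSupport hF ((hψ.integrable_comp hσ θ).mul_prod hχ)
    (hasCompactSupport_mul_prod (hψ.hasCompactSupport_comp hσ θ) hχc)

lemma integral_mul_prod_eq_integral_iteratedDeriv_fst (hψ : IsWavelet M L ψ)
    (hχ : Integrable χ) (hχc : HasCompactSupport χ) {F : ℝ → ℝ → ℝ}
    (hFx : ∀ y, ContDiff ℝ M fun x => F x y) (hF : Continuous fun z : ℝ × ℝ => F z.1 z.2)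
    (hFM : Continuous fun z : ℝ × ℝ => iteratedDeriv M (fun x => F x z.2) z.1)
    (hσ : σ ≠ 0) (θ : ℝ) :
    ∫ z : ℝ × ℝ, F z.1 z.2 * (ψ (σ * z.1 - θ) * χ z.2)
      = (-σ⁻¹) ^ M * ∫ z : ℝ × ℝ, iteratedDeriv M (fun x => F x z.2) z.1 *
          (Psi L ψ M (σ * z.1 - θ) * χ z.2) := by
  have hΨ : IsWavelet 0 L (Psi L ψ M) := hψ.psi (zero_add M).le
  have hint := hψ.integrable_mul_prod hχ hχc hF hσ θ
  have hintM := hΨ.integrable_mul_prod hχ hχc hFM hσ θ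
  rw [Measure.volume_eq_prod] at hint hintM ⊢
  rw [integral_prod_symm _ hint, integral_prod_symm _ hintM, ← integral_const_mul]
  refine integral_congr_ae (ae_of_all _ fun y => ?_)
  simp only [← mul_assoc, integral_mul_const]
  rw [hψ.integral_mul_comp_eq_integral_iteratedDeriv_mul_psi (hFx y) hσ]

theorem integral_mul_prod_eq_integral_partialDeriv2 (hψ₁ : IsWavelet M L₁ ψ₁)
    (hψ₂ : IsWavelet N L₂ ψ₂) {f : ℝ → ℝ → ℝ} (hfx : ∀ y, ContDiff ℝ M fun x => f x y)
    (hfy : ∀ x, ContDiff ℝ N fun y => iteratedDeriv M (fun x' => f x' y) x)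
    (hf : Continuous fun z : ℝ × ℝ => f z.1 z.2)
    (hfM : Continuous fun z : ℝ × ℝ => iteratedDeriv M (fun x => f x z.2) z.1)
    (hfMN : Continuous fun z : ℝ × ℝ => partialDeriv2 M N f z.1 z.2)
    (hσ₁ : σ₁ ≠ 0) (hσ₂ : σ₂ ≠ 0) (θ₁ θ₂ : ℝ) :
    ∫ z : ℝ × ℝ, f z.1 z.2 * (ψ₁ (σ₁ * z.1 - θ₁) * ψ₂ (σ₂ * z.2 - θ₂))
      = (-σ₁⁻¹) ^ M * (-σ₂⁻¹) ^ N * ∫ z : ℝ × ℝ, partialDeriv2 M N f z.1 z.2 *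
          (Psi L₁ ψ₁ M (σ₁ * z.1 - θ₁) * Psi L₂ ψ₂ N (σ₂ * z.2 - θ₂)) := by
  have hΨ₁ : IsWavelet 0 L₁ (Psi L₁ ψ₁ M) := hψ₁.psi (zero_add M).le
  have hx := hψ₁.integral_mul_prod_eq_integral_iteratedDeriv_fst (hψ₂.integrable_comp hσ₂ θ₂)
    (hψ₂.hasCompactSupport_comp hσ₂ θ₂) hfx hf hfM hσ₁ θ₁
  -- The step in `y` is the step in `x` for the function with its two variables exchanged.
  have hy := hψ₂.integral_mul_prod_eq_integral_iteratedDeriv_fst (hΨ₁.integrable_comp hσ₁ θ₁)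
    (hΨ₁.hasCompactSupport_comp hσ₁ θ₁) hfy (hfM.comp continuous_swap)
    (hfMN.comp continuous_swap) hσ₂ θ₂
  rw [Measure.volume_eq_prod] at hx hy ⊢
  rw [← integral_prod_swap,
    ← integral_prod_swap (f := fun z : ℝ × ℝ => iteratedDeriv N _ _ * _)] at hy
  simp only [Prod.fst_swap, Prod.snd_swap, mul_comm (ψ₂ _), mul_comm (Psi L₂ ψ₂ N _)] at hy
  rw [hx, hy, mul_assoc]
  rfl

lemma mul_eq_zero_of_notMem_window_prod (hψ₁ : IsWavelet M L₁ ψ₁) (hψ₂ : IsWavelet N L₂ ψ₂)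
    (hσ₁ : 0 < σ₁) (hσ₂ : 0 < σ₂) {θ₁ θ₂ : ℝ} {z : ℝ × ℝ}
    (hz : z ∉ window L₁ σ₁ θ₁ ×ˢ window L₂ σ₂ θ₂) :
    ψ₁ (σ₁ * z.1 - θ₁) * ψ₂ (σ₂ * z.2 - θ₂) = 0 := by
  contrapose! hz
  exact ⟨(mem_window_iff hσ₁).2 (hψ₁.support_subset (left_ne_zero_of_mul hz)),
    (mem_window_iff hσ₂).2 (hψ₂.support_subset (right_ne_zero_of_mul hz))⟩

end IsWavelet

theorem rect_wavelet_mixed_partial_integration_general {M : ℕ} {L : ℝ} {ψ : ℝ → ℝ}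
    (hψ : IsWavelet M L ψ) {f : ℝ → ℝ → ℝ} (hfx : ∀ y, ContDiff ℝ M fun x => f x y)
    (hfy : ∀ x, ContDiff ℝ M fun y => iteratedDeriv M (fun x' => f x' y) x)
    (hf : Continuous fun z : ℝ × ℝ => f z.1 z.2)
    (hfM : Continuous fun z : ℝ × ℝ => iteratedDeriv M (fun x => f x z.2) z.1)
    (hfMM : Continuous fun z : ℝ × ℝ => partialDeriv2 M M f z.1 z.2)
    {σ₁ σ₂ : ℝ} (hσ₁ : 0 < σ₁) (hσ₂ : 0 < σ₂) (θ₁ θ₂ : ℝ) :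
    (∀ z : ℝ × ℝ, z ∉ window L σ₁ θ₁ ×ˢ window L σ₂ θ₂ →
      f z.1 z.2 * ψ (σ₁ * z.1 - θ₁) * ψ (σ₂ * z.2 - θ₂) = 0) ∧
    (∀ z : ℝ × ℝ, z ∉ window L σ₁ θ₁ ×ˢ window L σ₂ θ₂ →
      Psi L ψ M (σ₁ * z.1 - θ₁) * Psi L ψ M (σ₂ * z.2 - θ₂) *
        partialDeriv2 M M f z.1 z.2 = 0) ∧
    ∫ z : ℝ × ℝ, f z.1 z.2 * ψ (σ₁ * z.1 - θ₁) * ψ (σ₂ * z.2 - θ₂) =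
      (σ₁ * σ₂) ^ (-(M : ℤ)) *
        ∫ z : ℝ × ℝ, Psi L ψ M (σ₁ * z.1 - θ₁) * Psi L ψ M (σ₂ * z.2 - θ₂) *
          partialDeriv2 M M f z.1 z.2 := by
  have hΨ : IsWavelet 0 L (Psi L ψ M) := hψ.psi (zero_add M).le
  have hconst : (-σ₁⁻¹) ^ M * (-σ₂⁻¹) ^ M = (σ₁ * σ₂) ^ (-(M : ℤ)) := by
    rw [← mul_pow, neg_mul_neg, ← mul_inv, zpow_neg, zpow_natCast, inv_pow]
  refine ⟨fun z hz => ?_, fun z hz => ?_, ?_⟩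
  · rw [mul_assoc, hψ.mul_eq_zero_of_notMem_window_prod hψ hσ₁ hσ₂ hz, mul_zero]
  · rw [hΨ.mul_eq_zero_of_notMem_window_prod hΨ hσ₁ hσ₂ hz, zero_mul]
  · simp only [mul_assoc (f _ _), mul_comm _ (partialDeriv2 M M f _ _), ← hconst]
    exact hψ.integral_mul_prod_eq_integral_partialDeriv2 hψ hfx hfy hf hfM hfMM hσ₁.ne' hσ₂.ne'
      θ₁ θ₂

/-- If `ψ̃` has `M` vanishing moments then for every `f : ℝ² → ℝ` with all mixed
partials `∂^{a+b} f/∂x^a∂y^b`, `0 ≤ a, b ≤ M`, existing and continuous,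
`∬ f(x,y) ψ̃(σ₁x−θ₁) ψ̃(σ₂y−θ₂) dx dy
  = (σ₁σ₂)^{−M} ∬ Ψ_M(σ₁x−θ₁) Ψ_M(σ₂y−θ₂) ∂^{2M} f/∂x^M∂y^M dx dy`,
both integrands being supported in the rectangle `R(σ₁,θ₁,σ₂,θ₂)`. -/
theorem rect_wavelet_mixed_partial_integration
    (M : ℕ) (hM : 0 < M) (L : ℝ) (hL : 0 < L)
    (ψ : ℝ → ℝ) (hmeas : Measurable ψ) (hbdd : ∃ B : ℝ, ∀ x, |ψ x| ≤ B)
    (hsupp : ∀ x : ℝ, L < |x| → ψ x = 0)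
    (hmom : ∀ k : ℕ, k < M → ∫ x : ℝ, x ^ k * ψ x = 0) :
    ∀ f : ℝ → ℝ → ℝ,
      (∀ y : ℝ, ContDiff ℝ M fun x => f x y) →
      (∀ a : ℕ, a ≤ M → ∀ x : ℝ,
        ContDiff ℝ M fun y => iteratedDeriv a (fun x' => f x' y) x) →
      (∀ a b : ℕ, a ≤ M → b ≤ M →
        Continuous fun z : ℝ × ℝ => partialDeriv2 a b f z.1 z.2) →
      ∀ σ₁ σ₂ : ℝ, 0 < σ₁ → 0 < σ₂ → ∀ θ₁ θ₂ : ℝ,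
        (∀ z : ℝ × ℝ,
          z ∉ Set.Icc ((θ₁ - L) / σ₁) ((θ₁ + L) / σ₁) ×ˢ
              Set.Icc ((θ₂ - L) / σ₂) ((θ₂ + L) / σ₂) →
            f z.1 z.2 * ψ (σ₁ * z.1 - θ₁) * ψ (σ₂ * z.2 - θ₂) = 0) ∧
        (∀ z : ℝ × ℝ,
          z ∉ Set.Icc ((θ₁ - L) / σ₁) ((θ₁ + L) / σ₁) ×ˢ
              Set.Icc ((θ₂ - L) / σ₂) ((θ₂ + L) / σ₂) →
            Psi L ψ M (σ₁ * z.1 - θ₁) * Psi L ψ M (σ₂ * z.2 - θ₂) *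
              partialDeriv2 M M f z.1 z.2 = 0) ∧
        ∫ z : ℝ × ℝ, f z.1 z.2 * ψ (σ₁ * z.1 - θ₁) * ψ (σ₂ * z.2 - θ₂) =
          (σ₁ * σ₂) ^ (-(M : ℤ)) *
            ∫ z : ℝ × ℝ, Psi L ψ M (σ₁ * z.1 - θ₁) * Psi L ψ M (σ₂ * z.2 - θ₂) *
              partialDeriv2 M M f z.1 z.2 := by
  intro f hfx hfy hf σ₁ σ₂ hσ₁ hσ₂ θ₁ θ₂
  have hψ : IsWavelet M L ψ := .of_abs_le hmeas.aestronglyMeasurable hbdd.choose_spec hsupp hmom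
  exact rect_wavelet_mixed_partial_integration_general hψ hfx (hfy M le_rfl)
    (by simpa [partialDeriv2] using hf 0 0 M.zero_le M.zero_le)
    (by simpa [partialDeriv2] using hf M 0 le_rfl M.zero_le) (hf M M le_rfl le_rfl) hσ₁ hσ₂ θ₁ θ₂
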